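/- Let M be a finitely generated free abelian group of rank n and s : M →* ℂˣ a group homomorphism. Then the adic completion of ℂ[M] with respect to the maximal ideal ker(ev_s) is isomorphic, as a ℂ-algebra, to the formal power series ring ℂ[[x₁,…,xₙ]] (MvPowerSeries (Fin n) ℂ). -/

import Mathlib

set_option synthInstance.maxHeartbeats 1000000
set_option maxHeartbeats 2000000

namespace CompletionAux

open MvPolynomial

theorem algHom_ext_basis {M ι R : Type*} [CommGroup M] (b : Module.Basis ι ℤ (Additive M))
    [CommRing R] [Algebra ℂ R] (f g : MonoidAlgebra ℂ M →ₐ[ℂ] R)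
    (h : ∀ i, f (MonoidAlgebra.of ℂ M (b i).toMul) = g (MonoidAlgebra.of ℂ M (b i).toMul)) :
    f = g := by
  let F (f : MonoidAlgebra ℂ M →ₐ[ℂ] R) : M →* Rˣ :=
    MonoidHom.toHomUnits (MonoidHom.comp (f : MonoidAlgebra ℂ M →* R) (MonoidAlgebra.of ℂ M))
  let T (f : M →* Rˣ) : Additive M →ₗ[ℤ] Additive Rˣ :=
    AddMonoidHom.toIntLinearMap (MonoidHom.toAdditive f)
  have hF : T (F f) = T (F g) := by
    refine b.ext fun i => ?_
    exact congrArg Additive.ofMul (Units.ext (h i))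
  refine MonoidAlgebra.algHom_ext (fun m => ?_) (Subsingleton.elim _ _)
  have : F f m = F g m := congrArg Additive.toMul (LinearMap.congr_fun hF (Additive.ofMul m))
  exact congrArg Units.val this

theorem exists_algHom {M ι R : Type*} [CommGroup M] (b : Module.Basis ι ℤ (Additive M))
    [CommRing R] [Algebra ℂ R] (u : ι → Rˣ) :
    ∃ f : MonoidAlgebra ℂ M →ₐ[ℂ] R,
      ∀ i, f (MonoidAlgebra.of ℂ M (b i).toMul) = u i := by
  let L : Additive M →ₗ[ℤ] Additive Rˣ := b.constr ℤ (fun i => Additive.ofMul (u i))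
  let G : M →* Rˣ := AddMonoidHom.toMultiplicative L.toAddMonoidHom
  refine ⟨MonoidAlgebra.lift ℂ R M ((Units.coeHom R).comp G), fun i => ?_⟩
  rw [MonoidAlgebra.of_apply, MonoidAlgebra.lift_single, one_smul]
  have : L (b i) = Additive.ofMul (u i) := b.constr_basis ℤ _ i
  exact congrArg (fun z => ((Additive.toMul z : Rˣ) : R)) this

theorem factorPow_evalₐ {R : Type*} [CommRing R] (K : Ideal R) {m n : ℕ} (hle : m ≤ n)
    (x : AdicCompletion K R) :
    Ideal.Quotient.factorPow K hle (AdicCompletion.evalₐ K n x)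
      = AdicCompletion.evalₐ K m x := by
  induction x using AdicCompletion.induction_on with
  | _ x =>
    rw [AdicCompletion.evalₐ_mk, AdicCompletion.evalₐ_mk]
    exact AdicCompletion.Ideal.mk_eq_mk K hle x

theorem map_ker_le {M ι S : Type*} [CommGroup M] (b : Module.Basis ι ℤ (Additive M))
    [CommRing S] [Algebra ℂ S] (J : Ideal S) (ψ : MonoidAlgebra ℂ M →ₐ[ℂ] S)
    (evs : MonoidAlgebra ℂ M →ₐ[ℂ] ℂ)
    (h : ∀ i, ψ (MonoidAlgebra.of ℂ M (b i).toMul)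
      - algebraMap ℂ S (evs (MonoidAlgebra.of ℂ M (b i).toMul)) ∈ J) :
    (RingHom.ker evs.toRingHom).map ψ.toRingHom ≤ J := by
  have key : (Ideal.Quotient.mkₐ ℂ J).comp ψ =
      (Ideal.Quotient.mkₐ ℂ J).comp ((Algebra.ofId ℂ S).comp evs) :=
    algHom_ext_basis b _ _ fun i => Ideal.Quotient.eq.2 (h i)
  rw [Ideal.map_le_iff_le_comap]
  intro a ha
  have h2 := DFunLike.congr_fun key a
  rw [AlgHom.comp_apply, AlgHom.comp_apply, AlgHom.comp_apply, show evs a = 0 from ha,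
    map_zero, map_zero] at h2
  exact (Ideal.Quotient.eq_zero_iff_mem (I := J)).1 h2

/-- Compatible isomorphisms of the quotients give an isomorphism of completions. -/
theorem exists_equiv {P A : Type*} [CommRing P] [CommRing A] (J : Ideal P) (I : Ideal A)
    (φ : P →+* A) (hJ : ∀ k, ∀ p, φ p ∈ I ^ k ↔ p ∈ J ^ k)
    (hs : ∀ k, ∀ a, ∃ p, φ p - a ∈ I ^ k) :
    ∃ e : AdicCompletion J P ≃+* AdicCompletion I A,
      ∀ p, e (algebraMap P _ p) = algebraMap A _ (φ p) := by
  let q (k : ℕ) : P ⧸ J ^ k →+* A ⧸ I ^ k :=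
    Ideal.quotientMap (I ^ k) φ (fun p hp => (hJ k p).2 hp)
  have hq (k : ℕ) : Function.Bijective (q k) := by
    constructor
    · exact Ideal.quotientMap_injective' (fun p hp => (hJ k p).1 hp)
    · intro y
      obtain ⟨a, rfl⟩ := Ideal.Quotient.mk_surjective y
      obtain ⟨p, hp⟩ := hs k a
      refine ⟨Ideal.Quotient.mk _ p, ?_⟩
      exact (Ideal.Quotient.eq).2 hp
  have hcomp {m n : ℕ} (hle : m ≤ n) (x : P ⧸ J ^ n) :
      Ideal.Quotient.factorPow I hle (q n x) = q m (Ideal.Quotient.factorPow J hle x) := by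
    obtain ⟨p, rfl⟩ := Ideal.Quotient.mk_surjective x
    rfl
  let F : AdicCompletion J P →+* AdicCompletion I A :=
    AdicCompletion.liftRingHom I
      (fun k => (q k).comp (AdicCompletion.evalₐ J k : _ →+* _)) (by
        intro m n hle
        ext x
        simp only [RingHom.comp_apply]
        rw [hcomp hle]
        exact congrArg (q m) (factorPow_evalₐ J hle x))
  have hF (k x) : AdicCompletion.evalₐ I k (F x) = q k (AdicCompletion.evalₐ J k x) :=
    AdicCompletion.evalₐ_liftRingHom _ _ _ _ _
  let Q (k : ℕ) : P ⧸ J ^ k ≃+* A ⧸ I ^ k := RingEquiv.ofBijective (q k) (hq k)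
  let G : AdicCompletion I A →+* AdicCompletion J P :=
    AdicCompletion.liftRingHom J
      (fun k => ((Q k).symm : A ⧸ I ^ k →+* P ⧸ J ^ k).comp
        (AdicCompletion.evalₐ I k : AdicCompletion I A →+* A ⧸ I ^ k)) (by
        intro m n hle
        ext x
        apply (Q m).injective
        change q m (Ideal.Quotient.factorPow J hle ((Q n).symm (AdicCompletion.evalₐ I n x)))
          = Q m ((Q m).symm (AdicCompletion.evalₐ I m x))
        rw [← hcomp hle]
        change Ideal.Quotient.factorPow I hle (Q n ((Q n).symm _)) = Q m ((Q m).symm _)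
        rw [RingEquiv.apply_symm_apply, RingEquiv.apply_symm_apply]
        exact factorPow_evalₐ I hle x)
  have hG (k x) : AdicCompletion.evalₐ J k (G x) = (Q k).symm (AdicCompletion.evalₐ I k x) :=
    AdicCompletion.evalₐ_liftRingHom _ _ _ _ _
  refine ⟨RingEquiv.ofRingHom F G ?_ ?_, ?_⟩
  · ext1 x
    refine AdicCompletion.ext_evalₐ fun k => ?_
    simp only [RingHom.comp_apply, RingHom.id_apply]
    rw [hF, hG]
    exact (Q k).apply_symm_apply _
  · ext1 x
    refine AdicCompletion.ext_evalₐ fun k => ?_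
    simp only [RingHom.comp_apply, RingHom.id_apply]
    rw [hG, hF]
    exact (Q k).symm_apply_apply _
  · intro p
    refine AdicCompletion.ext_evalₐ fun k => ?_
    change AdicCompletion.evalₐ I k (F _) = _
    rw [hF, AlgHom.commutes, AlgHom.commutes]
    rfl

theorem main {M : Type*} [CommGroup M] {n : ℕ} (b : Module.Basis (Fin n) ℤ (Additive M))
    (s : M →* ℂˣ) (evs : MonoidAlgebra ℂ M →ₐ[ℂ] ℂ)
    (hevs : ∀ m : M, evs (MonoidAlgebra.of ℂ M m) = s m) :
    ∃ e : AdicCompletion (idealOfVars (Fin n) ℂ) (MvPolynomial (Fin n) ℂ) ≃+*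
        AdicCompletion (RingHom.ker evs.toRingHom) (MonoidAlgebra ℂ M),
      ∀ c : ℂ, e (algebraMap (MvPolynomial (Fin n) ℂ) _ (C c)) =
        algebraMap (MonoidAlgebra ℂ M) _ (algebraMap ℂ (MonoidAlgebra ℂ M) c) := by
  set J := idealOfVars (Fin n) ℂ with hJdef
  set I := RingHom.ker evs.toRingHom with hIdef
  let t (i : Fin n) : ℂ := (s (b i).toMul : ℂ)
  have ht (i) : t i ≠ 0 := Units.ne_zero _
  let E (i : Fin n) : MonoidAlgebra ℂ M := MonoidAlgebra.of ℂ M (b i).toMul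
  let φ : MvPolynomial (Fin n) ℂ →ₐ[ℂ] MonoidAlgebra ℂ M :=
    aeval (fun i => algebraMap ℂ _ (t i)⁻¹ * E i - 1)
  have hφX (i) : φ (X i) = algebraMap ℂ _ (t i)⁻¹ * E i - 1 := aeval_X _ i
  have hX (i) : (X i : MvPolynomial (Fin n) ℂ) ∈ J := Ideal.subset_span ⟨i, rfl⟩
  have hφJ : J.map φ.toRingHom ≤ I := by
    rw [hJdef, idealOfVars, Ideal.map_span, Ideal.span_le]
    rintro _ ⟨_, ⟨i, rfl⟩, rfl⟩
    change evs (φ (X i)) = 0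
    rw [hφX, map_sub, map_mul, AlgHom.commutes, map_one, hevs]
    exact sub_eq_zero.2 (inv_mul_cancel₀ (ht i))
  have hφJk (k : ℕ) : ∀ p ∈ J ^ k, φ p ∈ I ^ k := by
    intro p hp
    have := Ideal.mem_map_of_mem φ.toRingHom hp
    rw [Ideal.map_pow] at this
    exact Ideal.pow_right_mono hφJ k this
  have hψ (k : ℕ) : ∃ ψ : MonoidAlgebra ℂ M →ₐ[ℂ] MvPolynomial (Fin n) ℂ ⧸ J ^ k,
      ∀ i, ψ (E i) = Ideal.Quotient.mkₐ ℂ (J ^ k) (algebraMap ℂ _ (t i) * (1 + X i)) := by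
    have hu (i) : IsUnit (Ideal.Quotient.mkₐ ℂ (J ^ k) (algebraMap ℂ _ (t i) * (1 + X i))) := by
      rw [map_mul, AlgHom.commutes]
      refine ((IsUnit.mk0 _ (ht i)).map _).mul ?_
      rw [map_add, map_one]
      refine IsNilpotent.isUnit_one_add ⟨k, ?_⟩
      rw [← map_pow]
      exact Ideal.Quotient.eq_zero_iff_mem.2 (Ideal.pow_mem_pow (hX i) k)
    obtain ⟨f, hf⟩ := exists_algHom b (fun i => (hu i).unit)
    exact ⟨f, fun i => (hf i).trans (hu i).unit_spec⟩
  choose ψ hψ using hψ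
  have hψφ (k : ℕ) : (ψ k).comp φ = Ideal.Quotient.mkₐ ℂ (J ^ k) := by
    refine MvPolynomial.algHom_ext fun i => ?_
    rw [AlgHom.comp_apply, hφX, map_sub, map_mul, AlgHom.commutes, hψ, map_one, map_mul, AlgHom.commutes,
      ← mul_assoc, ← map_mul, inv_mul_cancel₀ (ht i), map_one, one_mul, map_add, map_one,
      add_sub_cancel_left]
  have hψI (k : ℕ) : I.map (ψ k).toRingHom ≤ J.map (Ideal.Quotient.mkₐ ℂ (J ^ k)).toRingHom := by
    refine map_ker_le b _ (ψ k) evs fun i => ?_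
    change ψ k (E i) - _ ∈ _
    rw [hψ, hevs, map_mul, AlgHom.commutes, map_add, map_one, mul_add, mul_one]
    change _ + _ - algebraMap ℂ _ (t i) ∈ _
    rw [add_sub_cancel_left]
    exact Ideal.mul_mem_left _ _ (Ideal.mem_map_of_mem _ (hX i))
  have hψIk (k : ℕ) : ∀ a ∈ I ^ k, ψ k a = 0 := by
    intro a ha
    have h1 := Ideal.mem_map_of_mem (ψ k).toRingHom ha
    rw [Ideal.map_pow] at h1
    have h2 := Ideal.pow_right_mono (hψI k) k h1
    rw [← Ideal.map_pow] at h2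
    have h3 : (J ^ k).map (Ideal.Quotient.mkₐ ℂ (J ^ k)).toRingHom = ⊥ :=
      Ideal.map_quotient_self _
    rw [h3] at h2
    exact h2
  suffices H : (∀ k, ∀ p, φ p ∈ I ^ k → p ∈ J ^ k) ∧ (∀ k, ∀ a, ∃ p, φ p - a ∈ I ^ k) by
    obtain ⟨e, he⟩ := exists_equiv J I φ.toRingHom
      (fun k p => ⟨H.1 k p, hφJk k p⟩) H.2
    refine ⟨e, fun c => ?_⟩
    rw [he]
    exact congrArg _ (φ.commutes c)
  constructor
  · intro k p h
    have h1 := hψIk k _ h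
    have h2 := DFunLike.congr_fun (hψφ k) p
    exact Ideal.Quotient.eq_zero_iff_mem.1 (h2.symm.trans h1)
  · intro k a
    let q : MvPolynomial (Fin n) ℂ ⧸ J ^ k →ₐ[ℂ] MonoidAlgebra ℂ M ⧸ I ^ k :=
      Ideal.quotientMapₐ (I ^ k) φ (fun p hp => hφJk k p hp)
    have hq (p) : q (Ideal.Quotient.mkₐ ℂ (J ^ k) p) = Ideal.Quotient.mkₐ ℂ (I ^ k) (φ p) := rfl
    have key : q.comp (ψ k) = Ideal.Quotient.mkₐ ℂ (I ^ k) := by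
      refine algHom_ext_basis b _ _ fun i => ?_
      rw [AlgHom.comp_apply]
      change q (ψ k (E i)) = Ideal.Quotient.mkₐ ℂ (I ^ k) (E i)
      rw [hψ, hq, map_mul, AlgHom.commutes, map_add, map_one, hφX, add_sub_cancel, ← mul_assoc,
        ← map_mul, mul_inv_cancel₀ (ht i), map_one, one_mul]
    obtain ⟨p, hp⟩ := Ideal.Quotient.mk_surjective (ψ k a)
    refine ⟨p, ?_⟩
    have h1 := DFunLike.congr_fun key a
    rw [AlgHom.comp_apply, ← hp] at h1
    exact Ideal.Quotient.eq.1 h1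

end CompletionAux

/-- The completion of the group algebra `ℂ[M]` of a finitely generated free abelian group
`M` of rank `n` at the maximal ideal `ker (ev_s)` of a point `s : M →* ℂˣ` is isomorphic,
as a ℂ-algebra, to the formal power series ring `ℂ[[x₁,…,xₙ]]`. -/
theorem completion_of_group_algebra_iso_power_series
    -- M: a finitely generated free abelian group of rank n (written multiplicatively)
    (M : Type*) [CommGroup M] [Module.Free ℤ (Additive M)] [Module.Finite ℤ (Additive M)]
    (n : ℕ) (hrank : Module.finrank ℤ (Additive M) = n)
    -- the point s, a homomorphism M →* ℂˣ
    (s : M →* ℂˣ)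
    -- ev_s : ℂ[M] → ℂ, the evaluation at s (e^λ ↦ s(λ))
    (evs : MonoidAlgebra ℂ M →ₐ[ℂ] ℂ)
    (hevs : ∀ m : M, evs (MonoidAlgebra.of ℂ M m) = s m) :
    -- the (ker ev_s)-adic completion of ℂ[M] is ℂ-algebra isomorphic to ℂ[[x₁,…,xₙ]]
    letI : Algebra ℂ (AdicCompletion (RingHom.ker evs.toRingHom) (MonoidAlgebra ℂ M)) :=
      ((algebraMap (MonoidAlgebra ℂ M)
          (AdicCompletion (RingHom.ker evs.toRingHom) (MonoidAlgebra ℂ M))).comp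
        (algebraMap ℂ (MonoidAlgebra ℂ M))).toAlgebra
    Nonempty
      (AdicCompletion (RingHom.ker evs.toRingHom) (MonoidAlgebra ℂ M)
        ≃ₐ[ℂ] MvPowerSeries (Fin n) ℂ) := by
  have b : Module.Basis (Fin n) ℤ (Additive M) := Module.finBasisOfFinrankEq ℤ (Additive M) hrank
  obtain ⟨e, he⟩ := CompletionAux.main b s evs hevs
  let E := MvPowerSeries.toAdicCompletionAlgEquiv (Fin n) ℂ
  let _ : Algebra ℂ (AdicCompletion (RingHom.ker evs.toRingHom) (MonoidAlgebra ℂ M)) :=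
      ((algebraMap (MonoidAlgebra ℂ M)
          (AdicCompletion (RingHom.ker evs.toRingHom) (MonoidAlgebra ℂ M))).comp
        (algebraMap ℂ (MonoidAlgebra ℂ M))).toAlgebra
  refine ⟨AlgEquiv.ofRingEquiv (f := e.symm.trans E.symm.toRingEquiv) fun c => ?_⟩
  change E.symm (e.symm (algebraMap (MonoidAlgebra ℂ M) _ (algebraMap ℂ (MonoidAlgebra ℂ M) c))) = _
  rw [← he, RingEquiv.symm_apply_apply, AlgEquiv.commutes]
  simp [MvPowerSeries.algebraMap_apply, MvPowerSeries.algebraMap_apply']
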